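/- arXiv:2312.01869 — 2 statements merged into one kernel-verified Lean document; each statement's English description precedes it below -/
import Mathlib

section
/- (Every strict service curve is a service curve.) Let A, D : [0,∞) → ℝ be continuous nondecreasing functions with A(0) = D(0) = 0 and D(t) ≤ A(t) for all t ≥ 0. Let β : [0,∞) → ℝ satisfy β(0) ≤ 0 and suppose the system offers the strict service curve β: for all 0 ≤ s ≤ t, if A(u) > D(u) for every u ∈ (s, t], then D(t) − D(s) ≥ β(t − s). Then β is a service curve: for all t ≥ 0, D(t) ≥ inf_{s ∈ [0,t]} (A(s) + β(t − s)). -/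
/-!
Fix `t` and let `s` be the last time in `[0, t]` at which the backlog `A - D` is not positive; it
exists because `A` and `D` are left-continuous and `A 0 ≤ D 0`. The system is backlogged throughout
`(s, t]`, so the strict service curve gives `β (t - s) ≤ D t - D s ≤ D t - A s`.
-/

open Set

section LastTime

variable {T G : Type*} [ConditionallyCompleteLinearOrder T] [TopologicalSpace T] [OrderTopology T]
  [LinearOrder G] [TopologicalSpace G] [OrderClosedTopology G]

theorem exists_le_and_forall_Ioc_lt {f g : T → G} {a b : T} (hab : a ≤ b)
    (hf : ∀ x ∈ Icc a b, ContinuousWithinAt f (Icc a x) x)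
    (hg : ∀ x ∈ Icc a b, ContinuousWithinAt g (Icc a x) x) (ha : f a ≤ g a) :
    ∃ s ∈ Icc a b, f s ≤ g s ∧ ∀ u ∈ Ioc s b, g u < f u := by
  let S : Set T := {x ∈ Icc a b | f x ≤ g x}
  have haS : a ∈ S := ⟨left_mem_Icc.2 hab, ha⟩
  have hS : BddAbove S := ⟨b, fun _ hx => hx.1.2⟩
  have hmem : sSup S ∈ Icc a b := ⟨le_csSup hS haS, csSup_le ⟨a, haS⟩ fun _ hx => hx.1.2⟩
  have hsub : S ⊆ Icc a (sSup S) := fun _ hx => ⟨hx.1.1, le_csSup hS hx⟩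
  refine ⟨sSup S, hmem, ?_, fun u hu => ?_⟩
  · exact ContinuousWithinAt.closure_le (csSup_mem_closure ⟨a, haS⟩ hS)
      ((hf _ hmem).mono hsub) ((hg _ hmem).mono hsub) fun _ hx => hx.2
  · by_contra! hle
    exact hu.1.not_ge (le_csSup hS ⟨⟨hmem.1.trans hu.1.le, hu.2⟩, hle⟩)

end LastTime

section ServiceCurve

variable {T G : Type*} [Zero T] [Sub T]

/-- `β` is a strict service curve for a system with cumulative input `A` and cumulative output `D`:
over every interval `(s, t]` on which the system is backlogged, the output grows by at least
`β (t - s)`. The time domain `T` may be all of `ℝ`, in which case only times `≥ 0` matter, or for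
instance `ℝ≥0` or `ℕ`; differences `t - s` are taken only for `s ≤ t`. -/
def IsStrictServiceCurve [Preorder T] [Preorder G] [Sub G] (A D β : T → G) : Prop :=
  ∀ s t : T, 0 ≤ s → s ≤ t → (∀ u ∈ Ioc s t, D u < A u) → β (t - s) ≤ D t - D s

theorem strict_service_curve_is_service_curve_general
    [ConditionallyCompleteLinearOrder T] [TopologicalSpace T] [OrderTopology T]
    [AddCommGroup G] [LinearOrder G] [IsOrderedAddMonoid G] [TopologicalSpace G]
    [OrderClosedTopology G] {A D β : T → G}
    (hA : ∀ t : T, 0 ≤ t → ContinuousWithinAt A (Icc 0 t) t)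
    (hD : ∀ t : T, 0 ≤ t → ContinuousWithinAt D (Icc 0 t) t)
    (h0 : A 0 ≤ D 0) (hβ : IsStrictServiceCurve A D β) {t : T} (ht : 0 ≤ t) :
    ∃ s ∈ Icc 0 t, A s + β (t - s) ≤ D t := by
  obtain ⟨s, hs, hAD, hbacklog⟩ :=
    exists_le_and_forall_Ioc_lt ht (fun x hx => hA x hx.1) (fun x hx => hD x hx.1) h0
  refine ⟨s, hs, ?_⟩
  calc A s + β (t - s) ≤ D s + (D t - D s) := add_le_add hAD (hβ s t hs.1 hs.2 hbacklog)
    _ = D t := add_sub_cancel _ _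

end ServiceCurve

-- In `ℝ`, the `sInf` of a set that is not bounded below is the junk value `0`.
theorem real_sInf_le_of_mem_of_le_of_nonneg {S : Set ℝ} {x c : ℝ} (hx : x ∈ S) (hxc : x ≤ c)
    (hc : 0 ≤ c) : sInf S ≤ c := by
  by_cases hS : BddBelow S
  · exact (csInf_le hS hx).trans hxc
  · exact (Real.sInf_of_not_bddBelow hS).trans_le hc

/-- **Every strict service curve is a service curve.** Let `A, D` be continuous
nondecreasing on `[0,∞)` with `A 0 = D 0 = 0` and `D ≤ A` on `[0,∞)`, and let `β`
with `β 0 ≤ 0` be a strict service curve: over any backlogged interval `(s, t]` the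
output increases by at least `β (t − s)`. Then `β` is a service curve:
`D t ≥ inf_{s ∈ [0,t]} (A s + β (t − s))` for all `t ≥ 0`. -/
theorem strict_service_curve_is_service_curve
    (A D β : ℝ → ℝ)
    (hAc : ContinuousOn A (Set.Ici 0)) (hDc : ContinuousOn D (Set.Ici 0))
    (hAm : MonotoneOn A (Set.Ici 0)) (hDm : MonotoneOn D (Set.Ici 0))
    (hA0 : A 0 = 0) (hD0 : D 0 = 0)
    (hDA : ∀ t : ℝ, 0 ≤ t → D t ≤ A t)
    (hβ0 : β 0 ≤ 0)
    (hstrict : ∀ s t : ℝ, 0 ≤ s → s ≤ t →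
      (∀ u ∈ Set.Ioc s t, D u < A u) → β (t - s) ≤ D t - D s) :
    ∀ t : ℝ, 0 ≤ t → sInf ((fun s => A s + β (t - s)) '' Set.Icc 0 t) ≤ D t := by
  intro t ht
  obtain ⟨s, hs, hle⟩ := strict_service_curve_is_service_curve_general
    (fun u hu => (hAc u hu).mono Icc_subset_Ici_self)
    (fun u hu => (hDc u hu).mono Icc_subset_Ici_self) (hA0.trans hD0.symm).le hstrict ht
  exact real_sInf_le_of_mem_of_le_of_nonneg (mem_image_of_mem _ hs) hle
    (hD0.symm.trans_le (hDm self_mem_Ici ht ht))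
end

section
/- (Lemma 3: a work-conserving constant-rate link preserves the (σ, x) constraint.) Let σ ≥ 0, x ≥ 0, c ≥ 0. Let A : ℝ → ℝ be nondecreasing with A(0) = 0 and A(t) − A(s) ≤ σ + x(t − s) for all 0 ≤ s ≤ t (A is (σ, x)-upper constrained). Define the output of a work-conserving link of rate c by D(t) = inf_{s ∈ [0,t]} (A(s) + c(t − s)) for t ≥ 0. Then D is also (σ, x)-upper constrained: D(t) − D(s) ≤ σ + x(t − s) for all 0 ≤ s ≤ t. -/
/-!
Translating a candidate `u ∈ [0, s]` for the infimum `D s` by `t - s` gives a candidate for `D t`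
with the same remaining service time, `t - (u + (t - s)) = s - u`. The service terms therefore agree
and the two candidate values differ only by an increment of the input over a time `t - s`, which the
constraint bounds. The constraint also bounds the input from below on `[0, t]` in terms of its value
at `t`, so the infima are genuine.
-/

section MinPlus

variable {T G : Type*} [AddCommGroup T] [Preorder T] [AddCommGroup G]

/-- `A` has arrival curve `α`: its increments over times `s ≤ t` in `[0, ∞)` are at most
`α (t - s)`. Being `(σ, x)`-upper constrained is the case `α r = σ + x * r`. -/
def HasArrivalCurve [LE G] (A α : T → G) : Prop :=
  ∀ s t : T, 0 ≤ s → s ≤ t → A t - A s ≤ α (t - s)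

/-- The min-plus convolution of `f` and `g` over `[0, t]`, which is the output at time `t` of a
server with input `f` and exact service curve `g`; a constant-rate link has `g r = c * r`.
The values lie in a conditionally complete lattice, so the infimum is meaningful only for `0 ≤ t`
and when the values `f s + g (t - s)` are bounded below. -/
def minPlusConv [ConditionallyCompleteLattice G] (f g : T → G) (t : T) : G :=
  sInf ((fun s => f s + g (t - s)) '' Set.Icc 0 t)

theorem minPlusConv_le [ConditionallyCompleteLattice G] {f g : T → G} {s t : T}
    (hfg : BddBelow ((fun s => f s + g (t - s)) '' Set.Icc 0 t)) (hs : s ∈ Set.Icc 0 t) :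
    minPlusConv f g t ≤ f s + g (t - s) :=
  csInf_le hfg (Set.mem_image_of_mem _ hs)

theorem le_minPlusConv [ConditionallyCompleteLattice G] {f g : T → G} {t : T} {b : G}
    (ht : 0 ≤ t) (hb : ∀ s ∈ Set.Icc 0 t, b ≤ f s + g (t - s)) :
    b ≤ minPlusConv f g t :=
  le_csInf ((Set.nonempty_Icc.2 ht).image _) (Set.forall_mem_image.2 hb)

variable [IsOrderedAddMonoid T]

theorem bddBelow_image_add_sub [Preorder G] [IsOrderedAddMonoid G] {f g : T → G} {t : T}
    (hf : BddBelow (f '' Set.Icc 0 t)) (hg : BddBelow (g '' Set.Icc 0 t)) :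
    BddBelow ((fun s => f s + g (t - s)) '' Set.Icc 0 t) := by
  refine (hf.add hg).mono ?_
  rintro _ ⟨s, ⟨hs, hst⟩, rfl⟩
  exact Set.add_mem_add (Set.mem_image_of_mem f ⟨hs, hst⟩)
    (Set.mem_image_of_mem g ⟨sub_nonneg.2 hst, sub_le_self t hs⟩)

theorem HasArrivalCurve.bddBelow_image [Preorder G] [IsOrderedAddMonoid G] {A α : T → G} {t : T}
    (hA : HasArrivalCurve A α) (hα : BddAbove (α '' Set.Icc 0 t)) :
    BddBelow (A '' Set.Icc 0 t) := by
  obtain ⟨M, hM⟩ := hα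
  refine ⟨A t - M, ?_⟩
  rintro _ ⟨s, ⟨hs, hst⟩, rfl⟩
  have hαM : α (t - s) ≤ M :=
    hM (Set.mem_image_of_mem α ⟨sub_nonneg.2 hst, sub_le_self t hs⟩)
  exact sub_le_comm.1 ((hA s t hs hst).trans hαM)

variable [ConditionallyCompleteLattice G] [IsOrderedAddMonoid G] {A α β : T → G}

theorem hasArrivalCurve_minPlusConv (hA : HasArrivalCurve A α)
    (hAβ : ∀ t, BddBelow ((fun s => A s + β (t - s)) '' Set.Icc 0 t)) :
    HasArrivalCurve (minPlusConv A β) α := by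
  intro s t hs hst
  refine sub_le_comm.1 (le_minPlusConv hs ?_)
  rintro u ⟨hu, hus⟩
  have hd : 0 ≤ t - s := sub_nonneg.2 hst
  have hmem : u + (t - s) ∈ Set.Icc 0 t :=
    ⟨add_nonneg hu hd, (add_le_add_left hus _).trans_eq (add_sub_cancel s t)⟩
  have hinput : A (u + (t - s)) ≤ α (t - s) + A u := by
    simpa only [add_sub_cancel_left, sub_le_iff_le_add] using
      hA u (u + (t - s)) hu (le_add_of_nonneg_right hd)
  have hservice : t - (u + (t - s)) = s - u := by abel
  rw [sub_le_iff_le_add']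
  calc
    minPlusConv A β t ≤ A (u + (t - s)) + β (t - (u + (t - s))) := minPlusConv_le (hAβ t) hmem
    _ = A (u + (t - s)) + β (s - u) := by rw [hservice]
    _ ≤ α (t - s) + A u + β (s - u) := add_le_add_left hinput _
    _ = α (t - s) + (A u + β (s - u)) := add_assoc _ _ _

theorem work_conserving_preserves_constraint_general {D : T → G} (hA : HasArrivalCurve A α)
    (hα : ∀ t, BddAbove (α '' Set.Icc 0 t)) (hβ : ∀ t, BddBelow (β '' Set.Icc 0 t))
    (hD : ∀ t, 0 ≤ t → D t = minPlusConv A β t) : HasArrivalCurve D α := by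
  intro s t hs hst
  rw [hD s hs, hD t (hs.trans hst)]
  exact hasArrivalCurve_minPlusConv hA
    (fun r => bddBelow_image_add_sub (hA.bddBelow_image (hα r)) (hβ r)) s t hs hst

end MinPlus

/-- **A work-conserving constant-rate link preserves the `(σ, x)` constraint.**
If the nondecreasing input `A` (with `A 0 = 0`) is `(σ, x)`-upper constrained, then
the output `D t = inf_{s ∈ [0,t]} (A s + c(t − s))` of a work-conserving link of
rate `c` is also `(σ, x)`-upper constrained. -/
theorem work_conserving_preserves_constraint
    (σ x c : ℝ) (hσ : 0 ≤ σ) (hx : 0 ≤ x) (hc : 0 ≤ c)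
    (A : ℝ → ℝ) (hAmono : Monotone A) (hA0 : A 0 = 0)
    (hA : ∀ s t : ℝ, 0 ≤ s → s ≤ t → A t - A s ≤ σ + x * (t - s))
    (D : ℝ → ℝ)
    (hD : ∀ t : ℝ, 0 ≤ t → D t = sInf ((fun s => A s + c * (t - s)) '' Set.Icc 0 t)) :
    ∀ s t : ℝ, 0 ≤ s → s ≤ t → D t - D s ≤ σ + x * (t - s) :=
  work_conserving_preserves_constraint_general
    (α := fun r => σ + x * r) (β := fun r => c * r) hA
    (fun _ => isCompact_Icc.bddAbove_image (by fun_prop))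
    (fun _ => isCompact_Icc.bddBelow_image (by fun_prop)) hD
end
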